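/- Correctness of the recursive classical–quantum adder (Figure 8): let n, m, x, c : ℕ with m ≤ n, x < 2^n and c < 2^n. Write x_L = x % 2^m, x_H = x / 2^m, c_L = c % 2^m, c_H = c / 2^m, and let carry = if 2^m ≤ x_L + c_L then 1 else 0. Then (x + c) % 2^n = 2^m * ((x_H + c_H + carry) % 2^(n−m)) + (x_L + c_L) % 2^m. That is, adding the constant c to an n-bit register splits into adding c_L to the low m bits, computing the carry x_L + c_L ≥ 2^m (equivalently x_L ≥ 2^m − c_L), and adding c_H plus the carry to the high n − m bits. -/

import Mathlib

/-- **Correctness of the recursive classical–quantum adder (Figure 8).**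
Adding the constant `c` to an `n`-bit register holding `x` splits into adding the low
part `c_L` to the low `m` bits, computing the carry `x_L + c_L ≥ 2^m`, and adding the
high part `c_H` plus the carry to the high `n - m` bits. -/
theorem classical_quantum_adder_recursive (n m x c : ℕ) (hm : m ≤ n)
    (hx : x < 2 ^ n) (hc : c < 2 ^ n) :
    (x + c) % 2 ^ n =
      2 ^ m * ((x / 2 ^ m + c / 2 ^ m +
          (if 2 ^ m ≤ x % 2 ^ m + c % 2 ^ m then 1 else 0)) % 2 ^ (n - m)) +
        (x % 2 ^ m + c % 2 ^ m) % 2 ^ m := by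
  rw [← Nat.add_div (Nat.two_pow_pos m), ← Nat.add_mod, ← pow_mul_pow_sub 2 hm, Nat.mod_mul,
    Nat.add_comm (_ % _)]
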